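/- Let T be a finite tree on n vertices. Then k(T) = 3 if and only if T belongs to the family 𝒯 of trees obtained either by appending b ≥ 1 pendant vertices to each leaf of a star K_{1,t} with t ≥ 2 leaves, or by appending b ≥ 1 pendant vertices to each leaf of a balanced double star. -/

import Mathlib

/-- The status (transmission index) of a vertex: the sum of distances to all vertices. -/
noncomputable def SimpleGraph.status {V : Type*} [Fintype V] (G : SimpleGraph V) (v : V) : ℕ :=
  ∑ u : V, G.dist v u

/-- `k(G)`: the number of distinct status values among the vertices of `G`. -/
noncomputable def SimpleGraph.numStatusValues {V : Type*} [Fintype V] (G : SimpleGraph V) : ℕ :=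
  (Finset.univ.image G.status).card

/-- The tree obtained from the star `K_{1,t}` by appending `b` pendant vertices to each of
its `t` leaves.  `Sum.inl ()` is the center, `Sum.inr (Sum.inl i)` is the `i`-th leaf of the
star, `Sum.inr (Sum.inr (i, j))` is the `j`-th pendant vertex appended to the `i`-th leaf. -/
def starWithPendants (t b : ℕ) : SimpleGraph (Unit ⊕ (Fin t ⊕ Fin t × Fin b)) :=
  SimpleGraph.fromRel (fun x y =>
    (∃ i : Fin t, x = Sum.inl () ∧ y = Sum.inr (Sum.inl i)) ∨
    (∃ (i : Fin t) (j : Fin b), x = Sum.inr (Sum.inl i) ∧ y = Sum.inr (Sum.inr (i, j))))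

/-- The tree obtained from the balanced double star (two adjacent centers, each with `a`
leaves) by appending `b` pendant vertices to each of its `2a` leaves.  `Sum.inl s` is a
center, `Sum.inr (Sum.inl (s, i))` is the `i`-th leaf at center `s`, and
`Sum.inr (Sum.inr (s, i, j))` is the `j`-th pendant vertex appended to that leaf. -/
def doubleStarWithPendants (a b : ℕ) :
    SimpleGraph (Bool ⊕ (Bool × Fin a ⊕ Bool × Fin a × Fin b)) :=
  SimpleGraph.fromRel (fun x y =>
    (x = Sum.inl false ∧ y = Sum.inl true) ∨
    (∃ (s : Bool) (i : Fin a), x = Sum.inl s ∧ y = Sum.inr (Sum.inl (s, i))) ∨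
    (∃ (s : Bool) (i : Fin a) (j : Fin b),
      x = Sum.inr (Sum.inl (s, i)) ∧ y = Sum.inr (Sum.inr (s, i, j))))

/-!
In a tree on `n` vertices, moving along an edge from `v` to `u` changes the status by `n - 2 β`,
where `β` is the size of the branch at `v` towards `u`, because each vertex gets closer by one or
farther by one. The branches at `v` partition the other vertices, so the status is strictly convex
along paths, and it is minimal at a single vertex or at the two ends of an edge.

If there are three status values, order them as levels `0`, `1`, `2`. By convexity every vertex
above level `0` has one neighbour of smaller status and otherwise neighbours of larger status, so
the vertices of level `2` are leaves. They cannot hang on level `0`: all leaves of level `2` have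
neighbours of the same status, and a vertex of level `1` either has such a leaf as a neighbour or is
itself a leaf on level `0`. The branch sizes then determine the numbers of children level by level,
so vertices of equal status have equally many children, which makes the tree a member of `𝒯`. The
same branch sizes give the status values of the members of `𝒯`.
-/

namespace TreeStatus

open Finset SimpleGraph

variable {V : Type*} {G : SimpleGraph V}

section Branch

lemma exists_adj_dist_lt (hG : G.Connected) {v x : V} (h : v ≠ x) :
    ∃ u, G.Adj v u ∧ G.dist u x < G.dist v x := by
  obtain ⟨p, hp⟩ := hG.exists_walk_length_eq_dist v x
  cases p with
  | nil => exact absurd rfl h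
  | cons hvu q =>
    rw [Walk.length_cons] at hp
    exact ⟨_, hvu, by have := G.dist_le q; omega⟩

lemma eq_of_adj_of_dist_lt (hG : G.IsAcyclic) {u v w x : V} (hu : G.Adj v u) (hw : G.Adj v w)
    (hux : G.dist u x < G.dist v x) (hwx : G.dist w x < G.dist v x) : u = w := by
  have hvx : G.Reachable v x := Reachable.of_dist_ne_zero (by omega)
  have exists_isPath_cons : ∀ {y} (hy : G.Adj v y), G.dist y x < G.dist v x →
      ∃ q : G.Walk y x, (Walk.cons hy q).IsPath := by
    intro y hy hyx
    obtain ⟨q, hq⟩ := (hy.symm.reachable.trans hvx).exists_walk_length_eq_dist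
    have hle := G.dist_le (Walk.cons hy q)
    rw [Walk.length_cons] at hle
    exact ⟨q, Walk.isPath_of_length_eq_dist _ (by rw [Walk.length_cons]; omega)⟩
  obtain ⟨p, hp⟩ := exists_isPath_cons hu hux
  obtain ⟨q, hq⟩ := exists_isPath_cons hw hwx
  have hpaths := (hG.subsingleton_path v x).elim ⟨_, hp⟩ ⟨_, hq⟩
  simpa using congrArg (fun r : G.Path v x ↦ r.1.snd) hpaths

lemma dist_eq_dist_add_one_or (hT : G.IsTree) {u v : V} (h : G.Adj v u) (x : V) :
    G.dist v x = G.dist u x + 1 ∨ G.dist u x = G.dist v x + 1 := by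
  simpa only [G.dist_comm (u := x)] using hT.dist_eq_dist_add_one_of_adj x h

variable [Fintype V]

/-- The branch at `v` towards `u`: the vertices closer to `u` than to `v`. When `u` and `v` are
adjacent in a tree, it is the component of `u` after deleting the edge `uv`. -/
noncomputable def branch (G : SimpleGraph V) (v u : V) : Finset V :=
  {x | G.dist u x < G.dist v x}

lemma mem_branch {u v x : V} : x ∈ branch G v u ↔ G.dist u x < G.dist v x := by
  simp [branch]

lemma status_add_card (hT : G.IsTree) {u v : V} (h : G.Adj v u) :
    G.status v + Fintype.card V = G.status u + 2 * #(branch G v u) := by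
  have hdist (x : V) :
      G.dist v x + 1 = G.dist u x + 2 * if G.dist u x < G.dist v x then 1 else 0 := by
    have := dist_eq_dist_add_one_or hT h x
    split_ifs <;> omega
  calc G.status v + Fintype.card V
      = ∑ x, (G.dist v x + 1) := by simp [status, sum_add_distrib]
    _ = ∑ x, (G.dist u x + 2 * if G.dist u x < G.dist v x then 1 else 0) :=
        sum_congr rfl fun x _ ↦ hdist x
    _ = G.status u + 2 * #(branch G v u) := by
        rw [sum_add_distrib, ← mul_sum, sum_boole, status, branch, Nat.cast_id]

lemma card_branch_add_card_branch (hT : G.IsTree) {u v : V} (h : G.Adj v u) :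
    #(branch G v u) + #(branch G u v) = Fintype.card V := by
  have h₁ := status_add_card hT h
  have h₂ := status_add_card hT h.symm
  omega

lemma disjoint_branch (hG : G.IsAcyclic) {u v w : V} (hu : G.Adj v u) (hw : G.Adj v w)
    (huw : u ≠ w) : Disjoint (branch G v u) (branch G v w) :=
  disjoint_left.mpr fun _ hxu hxw ↦
    huw (eq_of_adj_of_dist_lt hG hu hw (mem_branch.mp hxu) (mem_branch.mp hxw))

lemma biUnion_branch [DecidableEq V] [DecidableRel G.Adj] (hG : G.Connected) (v : V) :
    (G.neighborFinset v).biUnion (branch G v) = univ.erase v := by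
  ext x
  simp only [mem_biUnion, mem_neighborFinset, mem_branch, mem_erase, mem_univ, and_true]
  refine ⟨?_, fun h ↦ exists_adj_dist_lt hG h.symm⟩
  rintro ⟨u, -, hu⟩ rfl
  simp at hu

lemma sum_card_branch_add_one [DecidableRel G.Adj] (hT : G.IsTree) (v : V) :
    ∑ u ∈ G.neighborFinset v, #(branch G v u) + 1 = Fintype.card V := by
  classical
  rw [← card_biUnion, biUnion_branch hT.connected, card_erase_add_one (mem_univ v), card_univ]
  intro u hu w hw huw
  simp only [coe_neighborFinset, mem_neighborSet] at hu hw
  exact disjoint_branch hT.isAcyclic hu hw huw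

lemma card_branch_eq_one_add_sum [DecidableEq V] [DecidableRel G.Adj] (hT : G.IsTree) {u v : V}
    (h : G.Adj u v) :
    #(branch G u v) = 1 + ∑ w ∈ (G.neighborFinset v).erase u, #(branch G v w) := by
  have hsum := sum_card_branch_add_one hT v
  have hcompl := card_branch_add_card_branch hT h
  rw [← add_sum_erase _ _ ((G.mem_neighborFinset v u).mpr h.symm)] at hsum
  omega

lemma card_branch_eq_one (hT : G.IsTree) {u v : V} (h : G.Adj u v)
    (hleaf : ∀ w, G.Adj v w → w = u) : #(branch G u v) = 1 := by
  classical
  rw [card_branch_eq_one_add_sum hT h, Nat.add_eq_left]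
  refine sum_eq_zero fun w hw ↦ ?_
  rw [mem_erase, mem_neighborFinset] at hw
  exact absurd (hleaf w hw.2) hw.1

lemma status_add_two (hT : G.IsTree) {u v : V} (h : G.Adj u v)
    (hleaf : ∀ w, G.Adj v w → w = u) : G.status v + 2 = G.status u + Fintype.card V := by
  rw [status_add_card hT h, card_branch_eq_one hT h hleaf]

end Branch

section Convexity

variable [Fintype V]

lemma two_mul_status_add_two_le (hT : G.IsTree) {u v w : V} (hu : G.Adj v u) (hw : G.Adj v w)
    (huw : u ≠ w) : 2 * G.status v + 2 ≤ G.status u + G.status w := by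
  classical
  have hcard : #(branch G v u) + #(branch G v w) + 1 ≤ Fintype.card V := by
    rw [← sum_card_branch_add_one hT v, ← sum_pair (f := fun x ↦ #(branch G v x)) huw]
    gcongr
    simp [insert_subset_iff, hu, hw]
  have hvu := status_add_card hT hu
  have hvw := status_add_card hT hw
  omega

lemma status_add_two_of_forall_status_le (hT : G.IsTree) {u v : V}
    (hv : ∀ x, G.status x ≤ G.status v) (h : G.Adj u v) :
    G.status v + 2 = G.status u + Fintype.card V := by
  refine status_add_two hT h fun w hvw ↦ by_contra fun hwu ↦ ?_
  have := two_mul_status_add_two_le hT hvw h.symm hwu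
  have := hv u
  have := hv w
  omega

lemma eq_or_status_lt_of_dist_lt (hT : G.IsTree) {c : V} (hc : ∀ x, G.status c ≤ G.status x)
    {u v : V} (h : G.Adj v u) (hdist : G.dist u c < G.dist v c) :
    u = c ∨ G.status u < G.status v := by
  induction hd : G.dist u c using Nat.strong_induction_on generalizing u v with
  | _ d ih =>
    refine or_iff_not_imp_left.mpr fun huc ↦ ?_
    obtain ⟨w, huw, hwu⟩ := exists_adj_dist_lt hT.connected huc
    have hle : G.status w ≤ G.status u := by
      obtain rfl | hlt := ih _ (hd ▸ hwu) huw hwu rfl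
      exacts [hc u, hlt.le]
    have hvw : v ≠ w := by rintro rfl; omega
    have := two_mul_status_add_two_le hT h.symm huw hvw
    omega

lemma exists_adj_status_lt (hT : G.IsTree) {v x : V} (hx : G.status x < G.status v) :
    ∃ u, G.Adj v u ∧ G.status u < G.status v ∧
      ∀ w, G.Adj v w → w ≠ u → G.status v < G.status w := by
  have := hT.connected.nonempty
  obtain ⟨c, hc⟩ := Finite.exists_min G.status
  have hvc : v ≠ c := by rintro rfl; exact (hc x).not_gt hx
  obtain ⟨u, hvu, hu⟩ := exists_adj_dist_lt hT.connected hvc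
  have hlt : G.status u < G.status v := by
    obtain rfl | hlt := eq_or_status_lt_of_dist_lt hT hc hvu hu
    exacts [(hc x).trans_lt hx, hlt]
  refine ⟨u, hvu, hlt, fun w hvw hwu ↦ ?_⟩
  have := two_mul_status_add_two_le hT hvu hvw hwu.symm
  omega

lemma adj_of_forall_status_le (hT : G.IsTree) {c d : V} (hc : ∀ x, G.status c ≤ G.status x)
    (hd : ∀ x, G.status d ≤ G.status x) (hcd : c ≠ d) : G.Adj c d := by
  obtain ⟨u, hdu, hu⟩ := exists_adj_dist_lt hT.connected hcd.symm
  obtain rfl | hlt := eq_or_status_lt_of_dist_lt hT hc hdu hu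
  · exact hdu.symm
  · exact absurd (hd u) hlt.not_ge

end Convexity

/-- `ℓ` layers `G` into levels `0`, `1`, `2`: level `0` is a clique, and every other vertex has one
neighbour on the level below it, all its other neighbours being on the level above it. -/
structure IsLayered (G : SimpleGraph V) (ℓ : V → ℕ) : Prop where
  level_le_two : ∀ v, ℓ v ≤ 2
  adj_of_level_eq_zero : ∀ {u v}, ℓ u = 0 → ℓ v = 0 → u ≠ v → G.Adj u v
  exists_parent : ∀ {v}, ℓ v ≠ 0 →
    ∃ u, G.Adj v u ∧ ℓ u + 1 = ℓ v ∧ ∀ w, G.Adj v w → w ≠ u → ℓ w = ℓ v + 1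

/-- The neighbours of `v` on a higher level than `v`. -/
def children [Fintype V] (G : SimpleGraph V) [DecidableRel G.Adj] (ℓ : V → ℕ) (v : V) : Finset V :=
  {w | G.Adj v w ∧ ℓ v < ℓ w}

lemma mem_children [Fintype V] [DecidableRel G.Adj] {ℓ : V → ℕ} {v w : V} :
    w ∈ children G ℓ v ↔ G.Adj v w ∧ ℓ v < ℓ w := by
  simp [children]

namespace IsLayered

variable {ℓ : V → ℕ} {a b : ℕ}

lemma level_cases_of_adj (hℓ : IsLayered G ℓ) {u v : V} (h : G.Adj u v) :
    ℓ u = 0 ∧ ℓ v = 0 ∨ ℓ v = ℓ u + 1 ∨ ℓ u = ℓ v + 1 := by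
  by_cases hv : ℓ v = 0
  · by_cases hu : ℓ u = 0
    · exact .inl ⟨hu, hv⟩
    · obtain ⟨p, -, hp, hother⟩ := hℓ.exists_parent hu
      obtain rfl | hvp := eq_or_ne v p
      · omega
      · have := hother v h hvp
        omega
  · obtain ⟨p, -, hp, hother⟩ := hℓ.exists_parent hv
    obtain rfl | hup := eq_or_ne u p
    · omega
    · exact .inr (.inr (hother u h.symm hup))

lemma eq_of_adj_of_level_lt (hℓ : IsLayered G ℓ) {u v w : V} (hu : G.Adj u w) (hv : G.Adj v w)
    (huw : ℓ u < ℓ w) (hvw : ℓ v < ℓ w) : u = v := by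
  obtain ⟨p, -, -, hother⟩ := hℓ.exists_parent (v := w) (by omega)
  have eq_parent {x : V} (hx : G.Adj x w) (hxw : ℓ x < ℓ w) : x = p := by
    by_contra hne
    have := hother x hx.symm hne
    omega
  rw [eq_parent hu huw, eq_parent hv hvw]

lemma exists_adj_child (hℓ : IsLayered G ℓ) {w : V} {i : ℕ} (hw : ℓ w = i + 1) :
    ∃ v, G.Adj v w ∧ ℓ v = i := by
  obtain ⟨v, hwv, hv, -⟩ := hℓ.exists_parent (v := w) (by omega)
  exact ⟨v, hwv.symm, by omega⟩

lemma eq_of_adj_of_level_eq_two (hℓ : IsLayered G ℓ) {u v w : V} (hw : ℓ w = 2)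
    (hu : G.Adj w u) (hv : G.Adj w v) : u = v := by
  have level_lt {x : V} (hx : G.Adj w x) : ℓ x < ℓ w := by
    have := hℓ.level_cases_of_adj hx
    have := hℓ.level_le_two x
    omega
  exact hℓ.eq_of_adj_of_level_lt hu.symm hv.symm (level_lt hu) (level_lt hv)

lemma status_of_level_eq_two [Fintype V] (hℓ : IsLayered G ℓ) (hT : G.IsTree) {u v : V}
    (h : G.Adj u v) (hv : ℓ v = 2) : G.status v + 2 = G.status u + Fintype.card V :=
  status_add_two hT h fun _ hw ↦ hℓ.eq_of_adj_of_level_eq_two hv hw h.symm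

lemma bijective_sumElim_val (hℓ : IsLayered G ℓ) :
    (Sum.elim (↑) (Sum.elim (↑) (↑)) :
      {v // ℓ v = 0} ⊕ ({v // ℓ v = 1} ⊕ {v // ℓ v = 2}) → V).Bijective := by
  constructor
  · refine Subtype.val_injective.sumElim (Subtype.val_injective.sumElim Subtype.val_injective ?_) ?_
    · rintro ⟨v, hv⟩ ⟨w, hw⟩ rfl; simp_all
    · rintro ⟨v, hv⟩ (⟨w, hw⟩ | ⟨w, hw⟩) rfl <;> simp_all
  · intro v
    obtain hv | hv | hv : ℓ v = 0 ∨ ℓ v = 1 ∨ ℓ v = 2 := by have := hℓ.level_le_two v; omega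
    exacts [⟨.inl ⟨v, hv⟩, rfl⟩, ⟨.inr (.inl ⟨v, hv⟩), rfl⟩, ⟨.inr (.inr ⟨v, hv⟩), rfl⟩]

lemma card_level_zero_le_two [Fintype V] (hℓ : IsLayered G ℓ) (hG : G.IsAcyclic) :
    Fintype.card {v // ℓ v = 0} ≤ 2 := by
  classical
  rw [Fintype.card_subtype]
  refine not_lt.mp fun h ↦ ?_
  obtain ⟨u, hu, v, hv, w, hw, huv, huw, hvw⟩ := two_lt_card.mp h
  simp only [mem_filter_univ] at hu hv hw
  exact hG.cliqueFree le_rfl {u, v, w} <| is3Clique_triple_iff.mpr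
    ⟨hℓ.adj_of_level_eq_zero hu hv huv, hℓ.adj_of_level_eq_zero hu hw huw,
      hℓ.adj_of_level_eq_zero hv hw hvw⟩

section Fintype

variable [Fintype V] [DecidableRel G.Adj]

lemma level_of_mem_children (hℓ : IsLayered G ℓ) {v w : V} (h : w ∈ children G ℓ v) :
    ℓ w = ℓ v + 1 := by
  rw [mem_children] at h
  have := hℓ.level_cases_of_adj h.1
  omega

lemma erase_neighborFinset_eq_children [DecidableEq V] (hℓ : IsLayered G ℓ) (hG : G.IsAcyclic)
    {u v : V} (h : G.Adj u v) (huv : ℓ u ≤ ℓ v) :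
    (G.neighborFinset v).erase u = children G ℓ v := by
  ext w
  simp only [mem_erase, mem_neighborFinset, mem_children]
  constructor
  · rintro ⟨hwu, hvw⟩
    refine ⟨hvw, not_le.mp fun hle ↦ ?_⟩
    by_cases hv : ℓ v = 0
    · have huw := hℓ.adj_of_level_eq_zero (by omega) (by omega) hwu.symm
      exact hG.cliqueFree le_rfl {u, v, w} (is3Clique_triple_iff.mpr ⟨h, huw, hvw⟩)
    · have hlt_u : ℓ u < ℓ v := by have := hℓ.level_cases_of_adj h; omega
      have hlt_w : ℓ w < ℓ v := by have := hℓ.level_cases_of_adj hvw; omega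
      exact hwu (hℓ.eq_of_adj_of_level_lt hvw.symm h hlt_w hlt_u)
  · rintro ⟨hvw, hlt⟩
    exact ⟨by rintro rfl; omega, hvw⟩

lemma card_branch (hℓ : IsLayered G ℓ) (hT : G.IsTree) {u v : V} (h : G.Adj u v)
    (huv : ℓ u ≤ ℓ v) :
    #(branch G u v) = 1 + ∑ w ∈ children G ℓ v, #(branch G v w) := by
  classical
  rw [card_branch_eq_one_add_sum hT h, hℓ.erase_neighborFinset_eq_children hT.isAcyclic h huv]

lemma card_branch_of_level_eq_one (hℓ : IsLayered G ℓ) (hT : G.IsTree) {u v : V}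
    (h : G.Adj u v) (hu : ℓ u = 0) (hv : ℓ v = 1) :
    #(branch G u v) = 1 + #(children G ℓ v) := by
  rw [hℓ.card_branch hT h (by omega), card_eq_sum_ones]
  congr 1
  refine sum_congr rfl fun w hw ↦ ?_
  have hw' : ℓ w = 2 := by rw [hℓ.level_of_mem_children hw, hv]
  have hvw := (mem_children.mp hw).1
  exact card_branch_eq_one hT hvw fun x hwx ↦ hℓ.eq_of_adj_of_level_eq_two hw' hwx hvw.symm

lemma card_branch_of_level_eq_zero (hℓ : IsLayered G ℓ) (hT : G.IsTree)
    (hb : ∀ v, ℓ v = 1 → #(children G ℓ v) = b) {u v : V} (h : G.Adj u v) (hu : ℓ u = 0)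
    (hv : ℓ v = 0) : #(branch G u v) = 1 + #(children G ℓ v) * (1 + b) := by
  rw [hℓ.card_branch hT h (by omega), sum_const_nat]
  intro w hw
  have hw' : ℓ w = 1 := by rw [hℓ.level_of_mem_children hw, hv]
  rw [hℓ.card_branch_of_level_eq_one hT (mem_children.mp hw).1 hv hw', hb w hw']

lemma status_of_level_eq_one (hℓ : IsLayered G ℓ) (hT : G.IsTree) {u v : V} (h : G.Adj u v)
    (hu : ℓ u = 0) (hv : ℓ v = 1) :
    G.status v + 2 * (1 + #(children G ℓ v)) = G.status u + Fintype.card V := by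
  rw [status_add_card hT h, hℓ.card_branch_of_level_eq_one hT h hu hv]

lemma status_eq_iff_card_children_eq (hℓ : IsLayered G ℓ) (hT : G.IsTree)
    (hb : ∀ v, ℓ v = 1 → #(children G ℓ v) = b) {c d : V} (hc : ℓ c = 0) (hd : ℓ d = 0) :
    G.status c = G.status d ↔ #(children G ℓ c) = #(children G ℓ d) := by
  obtain rfl | hcd := eq_or_ne c d
  · simp
  have h := hℓ.adj_of_level_eq_zero hc hd hcd
  have hstatus := status_add_card hT h
  have hcard := card_branch_add_card_branch hT h
  have hbranch : #(branch G c d) = #(branch G d c) ↔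
      #(children G ℓ c) = #(children G ℓ d) := by
    rw [hℓ.card_branch_of_level_eq_zero hT hb h hc hd,
      hℓ.card_branch_of_level_eq_zero hT hb h.symm hd hc, Nat.add_left_cancel_iff,
      Nat.mul_left_inj (by omega), eq_comm]
  rw [← hbranch]
  omega

lemma status_eq_of_level_eq (hℓ : IsLayered G ℓ) (hT : G.IsTree)
    (ha : ∀ v, ℓ v = 0 → #(children G ℓ v) = a) (hb : ∀ v, ℓ v = 1 → #(children G ℓ v) = b)
    {u v : V} (huv : ℓ u = ℓ v) : G.status u = G.status v := by
  have level_zero {u v : V} (hu : ℓ u = 0) (hv : ℓ v = 0) : G.status u = G.status v := by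
    rw [hℓ.status_eq_iff_card_children_eq hT hb hu hv, ha u hu, ha v hv]
  have level_one {u v : V} (hu : ℓ u = 1) (hv : ℓ v = 1) : G.status u = G.status v := by
    obtain ⟨c, hcu, hc⟩ := hℓ.exists_adj_child hu
    obtain ⟨d, hdv, hd⟩ := hℓ.exists_adj_child hv
    have h₁ := hℓ.status_of_level_eq_one hT hcu hc hu
    have h₂ := hℓ.status_of_level_eq_one hT hdv hd hv
    rw [hb u hu] at h₁
    rw [hb v hv, ← level_zero hc hd] at h₂
    omega
  obtain hu | hu | hu : ℓ u = 0 ∨ ℓ u = 1 ∨ ℓ u = 2 := by have := hℓ.level_le_two u; omega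
  · exact level_zero hu (huv ▸ hu)
  · exact level_one hu (huv ▸ hu)
  · obtain ⟨p, hpu, hp⟩ := hℓ.exists_adj_child hu
    obtain ⟨q, hqv, hq⟩ := hℓ.exists_adj_child (huv ▸ hu)
    have h₁ := hℓ.status_of_level_eq_two hT hpu hu
    have h₂ := hℓ.status_of_level_eq_two hT hqv (huv ▸ hu)
    rw [← level_one hp hq] at h₂
    omega

theorem numStatusValues_eq_three (hℓ : IsLayered G ℓ) (hT : G.IsTree)
    (ha : ∀ v, ℓ v = 0 → #(children G ℓ v) = a) (hb : ∀ v, ℓ v = 1 → #(children G ℓ v) = b)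
    {w : V} (hw : ℓ w = 2) (hcard : 2 * (1 + b) < Fintype.card V) :
    G.numStatusValues = 3 := by
  obtain ⟨m, hmw, hm⟩ := hℓ.exists_adj_child hw
  obtain ⟨c, hcm, hc⟩ := hℓ.exists_adj_child hm
  have hstatus_m := hℓ.status_of_level_eq_one hT hcm hc hm
  have hstatus_w := hℓ.status_of_level_eq_two hT hmw hw
  rw [hb m hm] at hstatus_m
  have himage : univ.image G.status = {G.status c, G.status m, G.status w} := by
    refine Subset.antisymm (fun s hs ↦ ?_) (by simp [insert_subset_iff])
    obtain ⟨v, -, rfl⟩ := mem_image.mp hs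
    have status_eq {u : V} (huv : ℓ v = ℓ u) := hℓ.status_eq_of_level_eq hT ha hb huv
    obtain hv | hv | hv : ℓ v = 0 ∨ ℓ v = 1 ∨ ℓ v = 2 := by have := hℓ.level_le_two v; omega
    · simp [status_eq (hv.trans hc.symm)]
    · simp [status_eq (hv.trans hm.symm)]
    · simp [status_eq (hv.trans hw.symm)]
  rw [numStatusValues, himage]
  exact card_eq_three.mpr ⟨_, _, _, by omega, by omega, by omega, rfl⟩

end Fintype

end IsLayered

/-- The complete graph on `K` with `a` vertices appended to each vertex of `K` and `b` pendant
vertices appended to each of those. It specializes to `starWithPendants` when `K` has one vertex and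
to `doubleStarWithPendants` when `K` has two. -/
def cliqueWithPendants (K : Type*) (a b : ℕ) :
    SimpleGraph (K ⊕ (K × Fin a ⊕ K × Fin a × Fin b)) :=
  SimpleGraph.fromRel fun x y ↦
    (∃ s s' : K, x = Sum.inl s ∧ y = Sum.inl s') ∨
    (∃ (s : K) (i : Fin a), x = Sum.inl s ∧ y = Sum.inr (Sum.inl (s, i))) ∨
    (∃ (s : K) (i : Fin a) (j : Fin b),
      x = Sum.inr (Sum.inl (s, i)) ∧ y = Sum.inr (Sum.inr (s, i, j)))

section CliqueWithPendants

variable {K : Type*} {a b : ℕ}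

lemma nonempty_iso_starWithPendants (t b : ℕ) :
    Nonempty (cliqueWithPendants (Fin 1) t b ≃g starWithPendants t b) := by
  let e : Fin 1 ⊕ (Fin 1 × Fin t ⊕ Fin 1 × Fin t × Fin b) ≃ Unit ⊕ (Fin t ⊕ Fin t × Fin b) :=
    .sumCongr finOneEquiv (.sumCongr (.uniqueProd _ _) (.uniqueProd _ _))
  refine ⟨⟨e, ?_⟩⟩
  rintro (s | ⟨s, i⟩ | ⟨s, i, j⟩) (s' | ⟨s', i'⟩ | ⟨s', i', j'⟩) <;>
    obtain rfl := Subsingleton.elim s 0 <;> obtain rfl := Subsingleton.elim s' 0 <;>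
    simp [e, cliqueWithPendants, starWithPendants]

lemma nonempty_iso_doubleStarWithPendants (a b : ℕ) :
    Nonempty (cliqueWithPendants (Fin 2) a b ≃g doubleStarWithPendants a b) := by
  let e : Fin 2 ⊕ (Fin 2 × Fin a ⊕ Fin 2 × Fin a × Fin b) ≃
      Bool ⊕ (Bool × Fin a ⊕ Bool × Fin a × Fin b) :=
    .sumCongr finTwoEquiv
      (.sumCongr (finTwoEquiv.prodCongr (.refl _)) (finTwoEquiv.prodCongr (.refl _)))
  refine ⟨⟨e, ?_⟩⟩
  rintro (s | ⟨s, i⟩ | ⟨s, i, j⟩) (s' | ⟨s', i'⟩ | ⟨s', i', j'⟩) <;>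
    fin_cases s <;> fin_cases s' <;>
    simp [e, cliqueWithPendants, doubleStarWithPendants, finTwoEquiv]

/-- The layering of `cliqueWithPendants K a b`, with the clique as level `0`. -/
def pendantLevel : K ⊕ (K × Fin a ⊕ K × Fin a × Fin b) → ℕ :=
  Sum.elim (fun _ ↦ 0) (Sum.elim (fun _ ↦ 1) (fun _ ↦ 2))

lemma isLayered_pendantLevel : IsLayered (cliqueWithPendants K a b) pendantLevel where
  level_le_two := by
    rintro (_ | _ | _)
    exacts [zero_le_two, one_le_two, le_rfl]
  adj_of_level_eq_zero {u v} hu hv huv := by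
    rcases u with s | ⟨s, i⟩ | ⟨s, i, j⟩ <;> rcases v with s' | ⟨s', i'⟩ | ⟨s', i', j'⟩ <;>
      simp_all [pendantLevel, cliqueWithPendants]
  exists_parent {v} hv := by
    rcases v with s | ⟨s, i⟩ | ⟨s, i, j⟩
    · simp [pendantLevel] at hv
    · refine ⟨.inl s, ?_⟩
      simp [pendantLevel, cliqueWithPendants, eq_comm]
    · refine ⟨.inr (.inl (s, i)), ?_⟩
      simp [pendantLevel, cliqueWithPendants, eq_comm]

variable [Fintype K] [DecidableRel (cliqueWithPendants K a b).Adj]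

lemma card_children_of_pendantLevel_eq_zero {v : K ⊕ (K × Fin a ⊕ K × Fin a × Fin b)}
    (hv : pendantLevel v = 0) : #(children (cliqueWithPendants K a b) pendantLevel v) = a := by
  classical
  obtain s | ⟨s, i⟩ | ⟨s, i, j⟩ := v
  · have hchildren : children (cliqueWithPendants K a b) pendantLevel (.inl s) =
        univ.image fun i ↦ .inr (.inl (s, i)) := by
      ext (s' | ⟨s', i'⟩ | ⟨s', i', j'⟩) <;>
        simp [mem_children, pendantLevel, cliqueWithPendants, eq_comm]
    rw [hchildren, card_image_of_injective _ fun i i' h ↦ by simpa using h, card_fin]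
  all_goals simp [pendantLevel] at hv

lemma card_children_of_pendantLevel_eq_one {v : K ⊕ (K × Fin a ⊕ K × Fin a × Fin b)}
    (hv : pendantLevel v = 1) : #(children (cliqueWithPendants K a b) pendantLevel v) = b := by
  classical
  obtain s | ⟨s, i⟩ | ⟨s, i, j⟩ := v
  case inr.inl =>
    have hchildren : children (cliqueWithPendants K a b) pendantLevel (.inr (.inl (s, i))) =
        univ.image fun j ↦ .inr (.inr (s, i, j)) := by
      ext (s' | ⟨s', i'⟩ | ⟨s', i', j'⟩) <;>
        simp [mem_children, pendantLevel, cliqueWithPendants, eq_comm]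
    rw [hchildren, card_image_of_injective _ fun j j' h ↦ by simpa using h, card_fin]
  all_goals simp [pendantLevel] at hv

end CliqueWithPendants

lemma card_cliqueWithPendants_verts (K : Type*) [Fintype K] (a b : ℕ) :
    Fintype.card (K ⊕ (K × Fin a ⊕ K × Fin a × Fin b)) =
      Fintype.card K + Fintype.card K * a * (1 + b) := by
  simp only [Fintype.card_sum, Fintype.card_prod, Fintype.card_fin]
  ring

theorem numStatusValues_cliqueWithPendants {K : Type*} [Fintype K] {a b : ℕ}
    (hT : (cliqueWithPendants K a b).IsTree) (ha : 2 ≤ Fintype.card K * a) (hb : 1 ≤ b) :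
    (cliqueWithPendants K a b).numStatusValues = 3 := by
  classical
  have hK : 0 < Fintype.card K := Nat.pos_of_mul_pos_right (by omega : 0 < Fintype.card K * a)
  have ha' : 0 < a := Nat.pos_of_mul_pos_left (by omega : 0 < Fintype.card K * a)
  obtain ⟨s⟩ := Fintype.card_pos_iff.mp hK
  have hcard : 2 * (1 + b) < Fintype.card (K ⊕ (K × Fin a ⊕ K × Fin a × Fin b)) := by
    rw [card_cliqueWithPendants_verts]
    have := Nat.mul_le_mul_right (1 + b) ha
    omega
  exact isLayered_pendantLevel.numStatusValues_eq_three hT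
    (fun _ ↦ card_children_of_pendantLevel_eq_zero) (fun _ ↦ card_children_of_pendantLevel_eq_one)
    (w := .inr (.inr (s, ⟨0, ha'⟩, ⟨0, hb⟩))) rfl hcard

namespace IsLayered

variable [Fintype V] [DecidableRel G.Adj] {ℓ : V → ℕ} {a b : ℕ}

lemma exists_childEquiv (hℓ : IsLayered G ℓ) {i m : ℕ}
    (h : ∀ v, ℓ v = i → #(children G ℓ v) = m) :
    ∃ e : {v // ℓ v = i} × Fin m ≃ {w // ℓ w = i + 1},
      ∀ u p, G.Adj u.1 (e p).1 ↔ u = p.1 := by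
  let enum (v : {v // ℓ v = i}) : children G ℓ v ≃ Fin m := equivFinOfCardEq (h v v.2)
  let f (p : {v // ℓ v = i} × Fin m) : {w // ℓ w = i + 1} :=
    ⟨(enum p.1).symm p.2, by
      rw [hℓ.level_of_mem_children ((enum p.1).symm p.2).2, p.1.2]⟩
  have adj_f (p) : G.Adj p.1.1 (f p).1 := (mem_children.mp ((enum p.1).symm p.2).2).1
  have adj_f_iff (u p) : G.Adj u.1 (f p).1 ↔ u = p.1 := by
    refine ⟨fun hu ↦ Subtype.ext ?_, fun hu ↦ hu ▸ adj_f p⟩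
    exact hℓ.eq_of_adj_of_level_lt hu (adj_f p) (by have := u.2; have := (f p).2; omega)
      (by have := p.1.2; have := (f p).2; omega)
  have f_injective : f.Injective := by
    rintro ⟨v, j⟩ ⟨v', j'⟩ hf
    obtain rfl : v = v' := (adj_f_iff v (v', j')).mp (hf ▸ adj_f (v, j))
    simpa [f, Subtype.ext_iff] using hf
  have f_surjective : f.Surjective := by
    rintro ⟨w, hw⟩
    obtain ⟨v, hvw, hv⟩ := hℓ.exists_adj_child hw
    have hwv : w ∈ children G ℓ v := mem_children.mpr ⟨hvw, by omega⟩
    exact ⟨(⟨v, hv⟩, enum ⟨v, hv⟩ ⟨w, hwv⟩), by simp [f]⟩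
  exact ⟨.ofBijective f ⟨f_injective, f_surjective⟩, adj_f_iff⟩

theorem nonempty_iso_cliqueWithPendants {K : Type*} (hℓ : IsLayered G ℓ)
    (e₀ : K ≃ {v // ℓ v = 0}) (ha : ∀ v, ℓ v = 0 → #(children G ℓ v) = a)
    (hb : ∀ v, ℓ v = 1 → #(children G ℓ v) = b) :
    Nonempty (cliqueWithPendants K a b ≃g G) := by
  obtain ⟨e₁, adj_e₁⟩ := hℓ.exists_childEquiv ha
  obtain ⟨e₂, adj_e₂⟩ := hℓ.exists_childEquiv hb
  let f₁ : K × Fin a ≃ {v // ℓ v = 1} := (e₀.prodCongr (.refl _)).trans e₁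
  let f₂ : K × Fin a × Fin b ≃ {v // ℓ v = 2} :=
    (Equiv.prodAssoc _ _ _).symm.trans ((f₁.prodCongr (.refl _)).trans e₂)
  let f : K ⊕ (K × Fin a ⊕ K × Fin a × Fin b) ≃ V :=
    (Equiv.sumCongr e₀ (.sumCongr f₁ f₂)).trans (.ofBijective _ hℓ.bijective_sumElim_val)
  have level_f (x) : ℓ (f x) = pendantLevel x := by
    obtain s | p | q := x
    exacts [(e₀ s).2, (f₁ p).2, (f₂ q).2]
  have adj₀ {s s'} : G.Adj (e₀ s) (e₀ s') ↔ s ≠ s' := by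
    refine ⟨fun h hs ↦ G.irrefl (hs ▸ h), fun h ↦ ?_⟩
    exact hℓ.adj_of_level_eq_zero (e₀ s).2 (e₀ s').2 fun h' ↦ h (e₀.injective (Subtype.ext h'))
  have adj₁ {s p} : G.Adj (e₀ s) (f₁ p) ↔ s = p.1 := by simp [f₁, adj_e₁]
  have adj₂ {p q} : G.Adj (f₁ p) (f₂ q) ↔ p = (q.1, q.2.1) := by simp [f₂, adj_e₂]
  have not_adj {x y} (h : ¬ (pendantLevel x = 0 ∧ pendantLevel y = 0 ∨
      pendantLevel y = pendantLevel x + 1 ∨ pendantLevel x = pendantLevel y + 1)) :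
      ¬ G.Adj (f x) (f y) := by
    rw [← level_f, ← level_f] at h
    exact mt hℓ.level_cases_of_adj h
  refine ⟨⟨f, ?_⟩⟩
  rintro (s | ⟨s, i⟩ | ⟨s, i, j⟩) (s' | ⟨s', i'⟩ | ⟨s', i', j'⟩)
  · exact adj₀.trans (by simp [cliqueWithPendants])
  · exact adj₁.trans (by simp [cliqueWithPendants, eq_comm])
  · exact iff_of_false (not_adj (by simp [pendantLevel])) (by simp [cliqueWithPendants])
  · exact (G.adj_comm _ _).trans <| adj₁.trans (by simp [cliqueWithPendants, eq_comm])
  · exact iff_of_false (not_adj (by simp [pendantLevel])) (by simp [cliqueWithPendants])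
  · exact adj₂.trans (by simp [cliqueWithPendants, Prod.ext_iff])
  · exact iff_of_false (not_adj (by simp [pendantLevel])) (by simp [cliqueWithPendants])
  · exact (G.adj_comm _ _).trans <| adj₂.trans (by simp [cliqueWithPendants, Prod.ext_iff])
  · exact iff_of_false (not_adj (by simp [pendantLevel])) (by simp [cliqueWithPendants])

lemma card_children_eq_of_level_eq_one (hℓ : IsLayered G ℓ) (hT : G.IsTree)
    (hstatus : ∀ u v, ℓ u = ℓ v → G.status u = G.status v) {u v : V} (hu : ℓ u = 1)
    (hv : ℓ v = 1) : #(children G ℓ u) = #(children G ℓ v) := by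
  obtain ⟨c, hcu, hc⟩ := hℓ.exists_adj_child hu
  obtain ⟨d, hdv, hd⟩ := hℓ.exists_adj_child hv
  have h₁ := hℓ.status_of_level_eq_one hT hcu hc hu
  have h₂ := hℓ.status_of_level_eq_one hT hdv hd hv
  have := hstatus c d (hc.trans hd.symm)
  have := hstatus u v (hu.trans hv.symm)
  omega

end IsLayered

section Iso

variable {W : Type*} {H : SimpleGraph W}

lemma dist_map_le (f : G →g H) {u v : V} (h : G.Reachable u v) :
    H.dist (f u) (f v) ≤ G.dist u v := by
  obtain ⟨p, hp⟩ := h.exists_walk_length_eq_dist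
  rw [← hp, ← Walk.length_map f p]
  exact dist_le _

lemma dist_iso (f : G ≃g H) (u v : V) : H.dist (f u) (f v) = G.dist u v := by
  by_cases h : G.Reachable u v
  · refine le_antisymm (dist_map_le f.toHom h) ?_
    simpa using dist_map_le f.symm.toHom (f.reachable_iff.mpr h)
  · rw [dist_eq_zero_of_not_reachable h, dist_eq_zero_of_not_reachable (mt f.reachable_iff.mp h)]

lemma status_iso [Fintype V] [Fintype W] (f : G ≃g H) (v : V) :
    H.status (f v) = G.status v := by
  simp only [status, ← dist_iso f, ← Equiv.sum_comp f.toEquiv]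
  rfl

lemma numStatusValues_iso [Fintype V] [Fintype W] (f : G ≃g H) :
    H.numStatusValues = G.numStatusValues := by
  have himage : univ.image H.status = univ.image G.status := by
    ext s
    simp only [mem_image, mem_univ, true_and, ← status_iso f]
    exact f.surjective.exists
  rw [numStatusValues, numStatusValues, himage]

end Iso

section ThreeStatusValues

variable [Fintype V]

lemma exists_level {m : ℕ} (h : G.numStatusValues = m) :
    ∃ ℓ : V → ℕ, (∀ v, ℓ v < m) ∧ (∀ i < m, ∃ v, ℓ v = i) ∧
      ∀ u v, ℓ u < ℓ v ↔ G.status u < G.status v := by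
  let e := (univ.image G.status).orderIsoOfFin h
  let status' (v : V) : univ.image G.status := ⟨G.status v, mem_image_of_mem _ (mem_univ v)⟩
  refine ⟨fun v ↦ e.symm (status' v), fun v ↦ (e.symm (status' v)).isLt, fun i hi ↦ ?_,
    fun u v ↦ ?_⟩
  · obtain ⟨v, -, hv⟩ := mem_image.mp (e ⟨i, hi⟩).2
    have hstatus' : status' v = e ⟨i, hi⟩ := Subtype.ext hv
    exact ⟨v, by simp [hstatus']⟩
  · rw [Fin.val_fin_lt, e.symm.lt_iff_lt]
    rfl

lemma level_ne_zero_of_adj_of_level_eq_two (hT : G.IsTree) {ℓ : V → ℕ} (hle : ∀ v, ℓ v ≤ 2)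
    (hone : ∃ v, ℓ v = 1) (hlt : ∀ u v, ℓ u < ℓ v ↔ G.status u < G.status v) {u v : V}
    (h : G.Adj u v) (hv : ℓ v = 2) : ℓ u ≠ 0 := by
  intro hu
  have status_eq {x y : V} (hxy : ℓ x = ℓ y) : G.status x = G.status y := by
    have := hlt x y
    have := hlt y x
    omega
  have status_add_two_eq {x y : V} (hxy : G.Adj x y) (hy : ℓ y = 2) :
      G.status y + 2 = G.status x + Fintype.card V :=
    status_add_two_of_forall_status_le hT
      (fun z ↦ not_lt.mp fun hz ↦ by have := (hlt y z).mpr hz; have := hle z; omega) hxy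
  have hstatus_v := status_add_two_eq h hv
  obtain ⟨m, hm⟩ := hone
  have hum : G.status u < G.status m := (hlt u m).mp (by omega)
  obtain ⟨p, hmp, hp, hother⟩ := exists_adj_status_lt hT hum
  have hpu : G.status p = G.status u := status_eq (by have := (hlt p m).mpr hp; omega)
  have hmv : G.status m < G.status v := (hlt m v).mp (by omega)
  by_cases hleaf : ∀ w, G.Adj m w → w = p
  · have := status_add_two hT hmp.symm hleaf
    omega
  · push Not at hleaf
    obtain ⟨w, hmw, hwp⟩ := hleaf
    have hw : ℓ w = 2 := by
      have := (hlt m w).mpr (hother w hmw hwp)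
      have := hle w
      omega
    have hstatus_w := status_add_two_eq hmw hw
    have hwv : G.status w = G.status v := status_eq (hw.trans hv.symm)
    omega

lemma isLayered_of_status (hT : G.IsTree) {ℓ : V → ℕ} (hle : ∀ v, ℓ v ≤ 2)
    (hzero : ∃ v, ℓ v = 0) (hone : ∃ v, ℓ v = 1)
    (hlt : ∀ u v, ℓ u < ℓ v ↔ G.status u < G.status v) : IsLayered G ℓ where
  level_le_two := hle
  adj_of_level_eq_zero {u v} hu hv huv := by
    have status_le {x : V} (hx : ℓ x = 0) (y : V) : G.status x ≤ G.status y :=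
      not_lt.mp fun h ↦ by have := (hlt y x).mpr h; omega
    exact adj_of_forall_status_le hT (status_le hu) (status_le hv) huv
  exists_parent {v} hv := by
    obtain ⟨c, hc⟩ := hzero
    obtain ⟨u, hvu, hu, hother⟩ := exists_adj_status_lt hT ((hlt c v).mp (by omega))
    have huv : ℓ u < ℓ v := (hlt u v).mpr hu
    have hv_le := hle v
    refine ⟨u, hvu, ?_, fun w hvw hwu ↦ ?_⟩
    · by_cases hv2 : ℓ v = 2
      · have := level_ne_zero_of_adj_of_level_eq_two hT hle hone hlt hvu.symm hv2
        omega
      · omega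
    · have hvw_lt := (hlt v w).mpr (hother w hvw hwu)
      have := hle w
      omega

end ThreeStatusValues

theorem exists_iso_cliqueWithPendants [Fintype V] (hT : G.IsTree) (h : G.numStatusValues = 3) :
    ∃ m a b, m ≤ 2 ∧ 2 ≤ m * a ∧ 1 ≤ b ∧ Nonempty (cliqueWithPendants (Fin m) a b ≃g G) := by
  classical
  obtain ⟨ℓ, hlt_three, hlevel, hlt⟩ := exists_level h
  have hℓ : IsLayered G ℓ :=
    isLayered_of_status hT (fun v ↦ Nat.le_of_lt_succ (hlt_three v)) (hlevel 0 (by simp))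
      (hlevel 1 (by simp)) hlt
  have status_eq (u v : V) (huv : ℓ u = ℓ v) : G.status u = G.status v := by
    have := hlt u v
    have := hlt v u
    omega
  obtain ⟨w, hw⟩ := hlevel 2 (by simp)
  obtain ⟨p, hpw, hp⟩ := hℓ.exists_adj_child hw
  obtain ⟨c, hcp, hc⟩ := hℓ.exists_adj_child hp
  have hb (v) (hv : ℓ v = 1) : #(children G ℓ v) = #(children G ℓ p) :=
    hℓ.card_children_eq_of_level_eq_one hT status_eq hv hp
  have ha (v) (hv : ℓ v = 0) : #(children G ℓ v) = #(children G ℓ c) :=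
    (hℓ.status_eq_iff_card_children_eq hT hb hv hc).mp (status_eq v c (hv.trans hc.symm))
  have hb_pos : 1 ≤ #(children G ℓ p) :=
    card_pos.mpr ⟨w, mem_children.mpr ⟨hpw, by omega⟩⟩
  obtain ⟨f⟩ := hℓ.nonempty_iso_cliqueWithPendants (Fintype.equivFin _).symm ha hb
  refine ⟨_, _, _, hℓ.card_level_zero_le_two hT.isAcyclic, ?_, hb_pos, ⟨f⟩⟩
  -- `p` has larger status than `c`, so its branch contains less than half of the vertices.
  have hbranch := hℓ.status_of_level_eq_one hT hcp hc hp
  have hcp_lt : G.status c < G.status p := (hlt c p).mp (by omega)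
  have hcard := card_cliqueWithPendants_verts (Fin (Fintype.card {v // ℓ v = 0}))
    #(children G ℓ c) #(children G ℓ p)
  rw [Fintype.card_congr f.toEquiv, Fintype.card_fin] at hcard
  by_contra! hsmall
  have := hℓ.card_level_zero_le_two hT.isAcyclic
  have := Nat.mul_le_mul_right (1 + #(children G ℓ p)) (Nat.le_of_lt_succ hsmall)
  omega

theorem numStatusValues_eq_three_iff_exists_iso [Fintype V] (hT : G.IsTree) :
    G.numStatusValues = 3 ↔ ∃ m a b, m ≤ 2 ∧ 2 ≤ m * a ∧ 1 ≤ b ∧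
      Nonempty (cliqueWithPendants (Fin m) a b ≃g G) := by
  refine ⟨exists_iso_cliqueWithPendants hT, ?_⟩
  rintro ⟨m, a, b, -, ha, hb, ⟨f⟩⟩
  have hT' : (cliqueWithPendants (Fin m) a b).IsTree := f.isTree_iff.mpr hT
  rw [numStatusValues_iso f]
  exact numStatusValues_cliqueWithPendants hT' (by simpa using ha) hb

end TreeStatus

/-- A finite tree `T` has exactly three distinct status values if and only if `T` belongs to
the family `𝒯`, i.e. `T` is obtained by appending `b ≥ 1` pendant vertices to each leaf of a
star `K_{1,t}` with `t ≥ 2` leaves, or to each leaf of a balanced double star (with `a ≥ 1`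
leaves on each center). -/
theorem numStatusValues_eq_three_iff {V : Type*} [Fintype V]
    (G : SimpleGraph V) (hT : G.IsTree) :
    G.numStatusValues = 3 ↔
      ((∃ t b : ℕ, 2 ≤ t ∧ 1 ≤ b ∧ Nonempty (G ≃g starWithPendants t b)) ∨
       (∃ a b : ℕ, 1 ≤ a ∧ 1 ≤ b ∧ Nonempty (G ≃g doubleStarWithPendants a b))) := by
  rw [TreeStatus.numStatusValues_eq_three_iff_exists_iso hT]
  constructor
  · rintro ⟨m, a, b, hm, ha, hb, ⟨f⟩⟩
    interval_cases m
    · omega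
    · obtain ⟨g⟩ := TreeStatus.nonempty_iso_starWithPendants a b
      exact .inl ⟨a, b, by omega, hb, ⟨f.symm.trans g⟩⟩
    · obtain ⟨g⟩ := TreeStatus.nonempty_iso_doubleStarWithPendants a b
      exact .inr ⟨a, b, by omega, hb, ⟨f.symm.trans g⟩⟩
  · rintro (⟨t, b, ht, hb, ⟨f⟩⟩ | ⟨a, b, ha, hb, ⟨f⟩⟩)
    · obtain ⟨g⟩ := TreeStatus.nonempty_iso_starWithPendants t b
      exact ⟨1, t, b, by omega, by omega, hb, ⟨g.trans f.symm⟩⟩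
    · obtain ⟨g⟩ := TreeStatus.nonempty_iso_doubleStarWithPendants a b
      exact ⟨2, a, b, by omega, by omega, hb, ⟨g.trans f.symm⟩⟩
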